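/- Let m ≥ 2, let σ₀ = ±1 if m is odd and σ₀ = (−1)^{m/2} if m is even, and fix k ∈ ℝ and T ≥ 0. Let r₀ ∈ ℂ^m be the vector with components (r₀)_j = (ik)^{j−1} for j = 1, …, m. Then there exist τ̄ > 0 and a constant C > 0 such that for all τ ∈ (0, τ̄) and all t ∈ [0, T], ‖exp((t/τ) L_τ) r₀ − e^{−σ₀ (ik)^m t} r₀‖ ≤ Cτ, where exp denotes the matrix exponential. -/

import Mathlib

/-- The m×m matrix with entry `s` in (1-indexed) position (1, m), the matrix `P` in
positions `A_{i+1,j} = P_{ij}` for `1 ≤ i, j ≤ m-1`, and all other entries zero. -/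
noncomputable def embedA (m : ℕ) (s : ℝ) (P : Matrix (Fin (m-1)) (Fin (m-1)) ℝ) :
    Matrix (Fin m) (Fin m) ℝ := fun i j =>
  if hi : (i : ℕ) = 0 then (if (j : ℕ) = m - 1 then s else 0)
  else if hj : (j : ℕ) < m - 1 then
    P ⟨(i : ℕ) - 1, by have := i.isLt; omega⟩ ⟨(j : ℕ), hj⟩
  else 0

/-- The m×m matrix with entries `B_{i+1,j+1} = P_{ij}` (1-indexed) for `1 ≤ i, j ≤ m-1`
and all other entries zero. -/
noncomputable def embedB (m : ℕ) (P : Matrix (Fin (m-1)) (Fin (m-1)) ℝ) :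
    Matrix (Fin m) (Fin m) ℝ := fun i j =>
  if h : (i : ℕ) = 0 ∨ (j : ℕ) = 0 then 0
  else P ⟨(i : ℕ) - 1, by have := i.isLt; omega⟩ ⟨(j : ℕ) - 1, by have := j.isLt; omega⟩

/-- The (m-1)×(m-1) matrix `P*` with (1-indexed) entries `p_{ij} = 0` if `i + j ≠ m`,
and for `i + j = m`: `p_{ij} = σ₀ (-1)^(j-1)` if `j ≤ m/2`, `p_{ij} = σ₀ (-1)^(m-j)`
if `j > m/2`. -/
noncomputable def Pstar (m : ℕ) (σ₀ : ℝ) : Matrix (Fin (m-1)) (Fin (m-1)) ℝ := fun i j =>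
  if (i : ℕ) + (j : ℕ) + 2 = m then
    (if 2 * ((j : ℕ) + 1) ≤ m then σ₀ * (-1) ^ (j : ℕ)
     else σ₀ * (-1) ^ (m - ((j : ℕ) + 1)))
  else 0

/-- The m×m complex matrix `L_τ = -ik Ã_τ + B`, where `Ã_τ` has entry `τσ₀` in
(1-indexed) position (1, m) and `(Ã_τ)_{i+1,j} = P*_{ij}` for `1 ≤ i, j ≤ m-1`,
and `B_{i+1,j+1} = P*_{ij}` with all other entries zero. -/
noncomputable def Lmat (m : ℕ) (σ₀ k τ : ℝ) : Matrix (Fin m) (Fin m) ℂ :=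
  (-(Complex.I * (k : ℂ))) • (embedA m (τ * σ₀) (Pstar m σ₀)).map Complex.ofReal
    + (embedB m (Pstar m σ₀)).map Complex.ofReal

/-- The vector `r₀ ∈ ℂ^m` with components `(r₀)_j = (ik)^(j-1)`, `j = 1, …, m`. -/
noncomputable def r0 (m : ℕ) (k : ℝ) : Fin m → ℂ := fun j => (Complex.I * (k : ℂ)) ^ (j : ℕ)

open scoped Matrix in
lemma energy_bound {ι : Type*} [Fintype ι] (d : ι → ℝ) (A : Matrix ι ι ℂ)
    (hd : ∀ i, 0 ≤ d i)
    (hA : ∀ q : ι → ℂ, ∑ i, d i * inner ℝ (q i) ((A *ᵥ q) i) ≤ 0)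
    (w R : ℝ → ι → ℂ) (T g : ℝ)
    (hw : ∀ t, HasDerivAt w (A *ᵥ w t + R t) t) (hg : 0 ≤ g)
    (hR : ∀ t ∈ Set.Icc (0 : ℝ) T, ∑ i, d i * ‖R t i‖ ^ 2 ≤ g)
    (t : ℝ) (ht : t ∈ Set.Icc (0 : ℝ) T) :
    ∑ i, d i * ‖w t i‖ ^ 2 ≤ Real.exp T * (∑ i, d i * ‖w 0 i‖ ^ 2 + g * T) := by
  set E : ℝ → ℝ := fun t => ∑ i, d i * ‖w t i‖ ^ 2 with hE
  have hwi : ∀ t i, HasDerivAt (fun s => w s i) ((A *ᵥ w t) i + R t i) t := fun t i => by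
    simpa using (hasDerivAt_pi.1 (hw t)) i
  have hEd : ∀ t, HasDerivAt E
      (∑ i, d i * (2 * inner ℝ (w t i) ((A *ᵥ w t) i + R t i))) t := fun t =>
    HasDerivAt.fun_sum fun i _ => ((hwi t i).norm_sq).const_mul (d i)
  have hEb : ∀ t ∈ Set.Icc (0 : ℝ) T,
      ∑ i, d i * (2 * inner ℝ (w t i) ((A *ᵥ w t) i + R t i)) ≤ E t + g := by
    intro t ht
    have h1 : ∑ i, d i * (2 * inner ℝ (w t i) ((A *ᵥ w t) i + R t i))
        ≤ 2 * ∑ i, d i * inner ℝ (w t i) ((A *ᵥ w t) i)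
          + (∑ i, d i * ‖w t i‖ ^ 2 + ∑ i, d i * ‖R t i‖ ^ 2) := by
      rw [Finset.mul_sum, ← Finset.sum_add_distrib, ← Finset.sum_add_distrib]
      refine Finset.sum_le_sum fun i _ => ?_
      rw [inner_add_right]
      have h2 := real_inner_le_norm (w t i) (R t i)
      have h3 : 2 * inner ℝ (w t i) (R t i) ≤ ‖w t i‖ ^ 2 + ‖R t i‖ ^ 2 := by
        nlinarith [sq_nonneg (‖w t i‖ - ‖R t i‖)]
      have := mul_le_mul_of_nonneg_left h3 (hd i)
      linarith
    have := hA (w t)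
    have := hR t ht
    simp only [hE]
    linarith
  have hF : ∀ t, HasDerivAt (fun s => Real.exp (-s) * E s - g * s)
      (Real.exp (-t) * (-1) * E t + Real.exp (-t) *
        (∑ i, d i * (2 * inner ℝ (w t i) ((A *ᵥ w t) i + R t i))) - g * 1) t := fun t =>
    ((((hasDerivAt_id t).neg).exp).mul (hEd t)).sub ((hasDerivAt_id t).const_mul g)
  have hanti : AntitoneOn (fun s => Real.exp (-s) * E s - g * s) (Set.Icc 0 T) := by
    refine antitoneOn_of_deriv_nonpos (convex_Icc 0 T)
      (fun s _ => (hF s).continuousAt.continuousWithinAt)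
      (fun s _ => (hF s).differentiableAt.differentiableWithinAt) ?_
    intro s hs
    have hs' := interior_subset hs
    rw [(hF s).deriv]
    have h1 := hEb s hs'
    have h2 : Real.exp (-s) ≤ 1 := Real.exp_le_one_iff.2 (by linarith [hs'.1])
    have h3 := Real.exp_pos (-s)
    nlinarith [mul_le_mul_of_nonneg_left h1 h3.le]
  have h := hanti (⟨le_rfl, ht.1.trans ht.2⟩ : (0:ℝ) ∈ Set.Icc 0 T) ht ht.1
  simp only [neg_zero, Real.exp_zero, mul_zero, sub_zero, one_mul] at h
  have hE0 : 0 ≤ E 0 := Finset.sum_nonneg fun i _ => mul_nonneg (hd i) (by positivity)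
  have h4 : Real.exp (-t) * E t ≤ E 0 + g * T := by
    have := mul_le_mul_of_nonneg_left ht.2 hg
    linarith
  have hT0 : 0 ≤ T := ht.1.trans ht.2
  calc E t = Real.exp t * (Real.exp (-t) * E t) := by
        rw [← mul_assoc, ← Real.exp_add]; simp
    _ ≤ Real.exp t * (E 0 + g * T) := mul_le_mul_of_nonneg_left h4 (Real.exp_pos t).le
    _ ≤ Real.exp T * (E 0 + g * T) :=
        mul_le_mul_of_nonneg_right (Real.exp_le_exp.2 ht.2) (by positivity)

open scoped Matrix in
lemma dissip_of_entries {ι : Type*} [Fintype ι] (d : ι → ℝ) (A : Matrix ι ι ℂ)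
    (c : ι → ℝ) (hc : ∀ i, c i ≤ 0) [DecidableEq ι]
    (h : ∀ i j, (d i : ℂ) * A i j + (starRingEnd ℂ) ((d j : ℂ) * A j i)
      = if i = j then (c i : ℂ) else 0) (q : ι → ℂ) :
    ∑ i, d i * inner ℝ (q i) ((A *ᵥ q) i) ≤ 0 := by
  set X : ℂ := ∑ i, ∑ j, (starRingEnd ℂ) (q i) * ((d i : ℂ) * A i j) * q j with hX
  have h1 : ∑ i, d i * inner ℝ (q i) ((A *ᵥ q) i) = X.re := by
    rw [hX, Complex.re_sum]
    refine Finset.sum_congr rfl fun i _ => ?_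
    rw [Complex.inner, ← Complex.re_ofReal_mul]
    congr 1
    simp only [Matrix.mulVec, dotProduct]
    rw [Finset.sum_mul, Finset.mul_sum]
    exact Finset.sum_congr rfl fun j _ => by ring
  have h2 : X + (starRingEnd ℂ) X = ((∑ i, c i * ‖q i‖ ^ 2 : ℝ) : ℂ) := by
    have : (starRingEnd ℂ) X = ∑ i, ∑ j, (starRingEnd ℂ) (q i) *
        (starRingEnd ℂ) ((d j : ℂ) * A j i) * q j := by
      rw [hX, Finset.sum_comm]
      simp only [map_sum]
      refine Finset.sum_congr rfl fun i _ => Finset.sum_congr rfl fun j _ => ?_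
      simp only [map_mul, Complex.conj_conj]
      ring
    rw [this, hX, ← Finset.sum_add_distrib]
    push_cast
    refine Finset.sum_congr rfl fun i _ => ?_
    rw [← Finset.sum_add_distrib]
    have : ∀ j, (starRingEnd ℂ) (q i) * ((d i : ℂ) * A i j) * q j + (starRingEnd ℂ) (q i) *
        (starRingEnd ℂ) ((d j : ℂ) * A j i) * q j
        = if i = j then (c i : ℂ) * ((starRingEnd ℂ) (q i) * q j) else 0 := by
      intro j
      rw [← add_mul, ← mul_add, h i j]
      split_ifs <;> ring
    simp only [this, Finset.sum_ite_eq, Finset.mem_univ, if_true]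
    rw [Complex.conj_mul']
  have h3 := congrArg Complex.re h2
  rw [Complex.add_re, Complex.conj_re, Complex.ofReal_re] at h3
  have h4 : ∑ i, c i * ‖q i‖ ^ 2 ≤ 0 :=
    Finset.sum_nonpos fun i _ => mul_nonpos_of_nonpos_of_nonneg (hc i) (by positivity)
  rw [h1]; linarith

/-- The nonzero antidiagonal entries of `Pstar` by column. -/
noncomputable def pcoef (m : ℕ) (σ₀ : ℝ) (j : ℕ) : ℝ :=
  if 2 * (j + 1) ≤ m then σ₀ * (-1) ^ j else σ₀ * (-1) ^ (m - (j + 1))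

lemma pcoef_sq (m : ℕ) (σ₀ : ℝ) (h : σ₀ * σ₀ = 1) (j : ℕ) :
    pcoef m σ₀ j * pcoef m σ₀ j = 1 := by
  unfold pcoef
  split_ifs <;> rw [mul_mul_mul_comm, h, ← mul_pow] <;> norm_num

lemma Lmat_zero (m : ℕ) (hm : 2 ≤ m) (σ₀ k τ : ℝ) (i j : Fin m) (hi : (i : ℕ) = 0) :
    Lmat m σ₀ k τ i j
      = if (j : ℕ) = m - 1 then -(Complex.I * k) * ((τ * σ₀ : ℝ) : ℂ) else 0 := by
  simp only [Lmat, Matrix.add_apply, Matrix.smul_apply, Matrix.map_apply, embedA, embedB, hi]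
  rw [dif_pos trivial, dif_pos (Or.inl trivial)]
  split_ifs <;> simp

lemma Lmat_pos (m : ℕ) (hm : 2 ≤ m) (σ₀ k τ : ℝ) (i j : Fin m) (hi : (i : ℕ) ≠ 0) :
    Lmat m σ₀ k τ i j
      = (if (j : ℕ) = m - 1 - i then -(Complex.I * k) * (pcoef m σ₀ (m - 1 - i) : ℂ) else 0)
        + (if (j : ℕ) = m - i then (pcoef m σ₀ (m - 1 - i) : ℂ) else 0) := by
  have := i.isLt
  have := j.isLt
  simp only [Lmat, Matrix.add_apply, Matrix.smul_apply, Matrix.map_apply, embedA, embedB, hi,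
    Pstar, smul_eq_mul]
  congr 1
  · by_cases h : (j : ℕ) = m - 1 - i
    · rw [dif_neg (by simp), dif_pos (by omega), if_pos (by omega), if_pos h, pcoef, h]
    · rw [if_neg h, dif_neg (by simp)]
      split_ifs <;> first | omega | simp
  · by_cases h : (j : ℕ) = m - i
    · rw [dif_neg (by simp; omega), if_pos (by omega), if_pos h, pcoef,
        show (j : ℕ) - 1 = m - 1 - i by omega]
    · rw [if_neg h]
      split_ifs <;> first | omega | simp

open scoped Matrix in
lemma mulVec_zero (m : ℕ) (hm : 2 ≤ m) (σ₀ k τ : ℝ) (f : ℕ → ℂ) (i : Fin m)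
    (hi : (i : ℕ) = 0) :
    (Lmat m σ₀ k τ *ᵥ (fun j : Fin m => f j)) i
      = -(Complex.I * k) * ((τ * σ₀ : ℝ) : ℂ) * f (m - 1) := by
  simp only [Matrix.mulVec, dotProduct, Lmat_zero m hm σ₀ k τ i _ hi]
  rw [Finset.sum_eq_single (⟨m - 1, by omega⟩ : Fin m)]
  · simp
  · intro b _ hb
    rw [if_neg (fun h => hb (Fin.ext h)), zero_mul]
  · simp

open scoped Matrix in
lemma mulVec_pos (m : ℕ) (hm : 2 ≤ m) (σ₀ k τ : ℝ) (f : ℕ → ℂ) (i : Fin m)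
    (hi : (i : ℕ) ≠ 0) :
    (Lmat m σ₀ k τ *ᵥ (fun j : Fin m => f j)) i
      = (pcoef m σ₀ (m - 1 - i) : ℂ) * (f (m - i) - Complex.I * k * f (m - 1 - i)) := by
  have := i.isLt
  simp only [Matrix.mulVec, dotProduct, Lmat_pos m hm σ₀ k τ i _ hi, add_mul]
  rw [Finset.sum_add_distrib, Finset.sum_eq_single (⟨m - 1 - i, by omega⟩ : Fin m),
    Finset.sum_eq_single (⟨m - i, by omega⟩ : Fin m)]
  · simp; ring
  · intro b _ hb
    rw [if_neg (fun h => hb (Fin.ext h)), zero_mul]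
  · simp
  · intro b _ hb
    rw [if_neg (fun h => hb (Fin.ext h)), zero_mul]
  · simp

/-- Weights of the energy. -/
noncomputable def wgt (m : ℕ) (τ : ℝ) (i : Fin m) : ℝ := if (i : ℕ) = 0 then τ⁻¹ else 1

lemma pcoef_symm (m : ℕ) (σ₀ : ℝ) (j : ℕ) (h1 : 1 ≤ j) (h2 : j + 1 ≤ m) :
    pcoef m σ₀ (m - 1 - j) = pcoef m σ₀ j := by
  unfold pcoef
  split_ifs
  · have : m = 2 * j + 1 ∨ m = 2 * j  := by omega
    grind
  · congr 2; omega
  · congr 2; omega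
  · have : m = 2 * j + 1 ∨ m = 2 * j  := by omega
    grind

lemma pcoef_skew (m : ℕ) (σ₀ : ℝ) (j : ℕ) (h1 : 1 ≤ j) (h2 : j + 1 ≤ m) (h3 : 2 * j ≠ m) :
    pcoef m σ₀ (m - 1 - j) = - pcoef m σ₀ (j - 1) := by
  unfold pcoef
  split_ifs
  · omega
  · rw [show m - (j - 1 + 1) = (m - 1 - j) + 1 by omega, pow_succ]; ring
  · rw [show m - (m - 1 - j + 1) = (j - 1) + 1 by omega, pow_succ]; ring
  · omega

lemma pcoef_mid (m : ℕ) (hm : 2 ≤ m) (σ₀ : ℝ)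
    (hσ : (Odd m ∧ (σ₀ = 1 ∨ σ₀ = -1)) ∨ (Even m ∧ σ₀ = (-1) ^ (m / 2)))
    (i : ℕ) (h : 2 * i = m) : pcoef m σ₀ (m - 1 - i) = -1 := by
  rcases hσ with ⟨ho, _⟩ | ⟨_, hσ⟩
  · obtain ⟨r, hr⟩ := ho
    omega
  · unfold pcoef
    rw [if_pos (by omega), hσ, show m / 2 = (m - 1 - i) + 1 by omega, pow_succ, mul_right_comm,
      ← mul_pow]
    norm_num

lemma pcoef_zero (m : ℕ) (hm : 2 ≤ m) (σ₀ : ℝ) : pcoef m σ₀ 0 = σ₀ := by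
  simp [pcoef, hm]

lemma entries (m : ℕ) (hm : 2 ≤ m) (σ₀ : ℝ)
    (hσ : (Odd m ∧ (σ₀ = 1 ∨ σ₀ = -1)) ∨ (Even m ∧ σ₀ = (-1) ^ (m / 2))) (k τ : ℝ) (hτ : 0 < τ)
    (i j : Fin m) :
    (wgt m τ i : ℂ) * Lmat m σ₀ k τ i j
      + (starRingEnd ℂ) ((wgt m τ j : ℂ) * Lmat m σ₀ k τ j i)
      = if i = j then (((if 2 * (i : ℕ) = m then -2 else 0) : ℝ) : ℂ) else 0 := by
  have hi' := i.isLt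
  have hj' := j.isLt
  have hτ' : (τ : ℂ) ≠ 0 := by exact_mod_cast hτ.ne'
  have key : ∀ i j : Fin m, (i : ℕ) = 0 → (j : ℕ) ≠ 0 → 
      (wgt m τ i : ℂ) * Lmat m σ₀ k τ i j
      + (starRingEnd ℂ) ((wgt m τ j : ℂ) * Lmat m σ₀ k τ j i) = 0 := by
    intro i j hi hj
    have hj' := j.isLt
    rw [Lmat_zero m hm σ₀ k τ i j hi, Lmat_pos m hm σ₀ k τ j i hj, wgt, wgt, if_pos hi, if_neg hj]
    rw [if_neg (show ¬ (i : ℕ) = m - j by omega)]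
    by_cases h : (j : ℕ) = m - 1
    · rw [if_pos h, if_pos (by omega), h, Nat.sub_self, pcoef_zero m hm]
      simp
      field_simp
      ring
    · rw [if_neg h, if_neg (by omega)]
      simp
  by_cases hi : (i : ℕ) = 0
  · by_cases hj : (j : ℕ) = 0
    · have : i = j := Fin.ext (by omega)
      subst this
      rw [Lmat_zero m hm σ₀ k τ i i hi, if_neg (by omega), if_pos rfl, if_neg (by omega)]
      simp
    · rw [key i j hi hj, if_neg (show ¬ i = j from fun h => hj (h ▸ hi))]
  · by_cases hj : (j : ℕ) = 0
    · have := congrArg (starRingEnd ℂ) (key j i hj hi)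
      rw [map_add, Complex.conj_conj, map_zero, add_comm, map_mul, Complex.conj_ofReal] at this
      rw [map_mul, Complex.conj_ofReal, if_neg (show ¬ i = j from fun h => hi (h ▸ hj))]
      exact this
    · rw [Lmat_pos m hm σ₀ k τ j i hj, Lmat_pos m hm σ₀ k τ i j hi, wgt, wgt, if_neg hi, if_neg hj]
      by_cases h1 : (i : ℕ) + j + 1 = m
      · rw [if_pos (show (j : ℕ) = m - 1 - i by omega), if_neg (show ¬ (j : ℕ) = m - i by omega),
          if_pos (show (i : ℕ) = m - 1 - j by omega), if_neg (show ¬ (i : ℕ) = m - j by omega),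
          pcoef_symm m σ₀ i (by omega) (by omega), show m - 1 - (j : ℕ) = i by omega]
        by_cases h3 : i = j
        · subst h3
          rw [if_neg (show ¬ 2 * (i : ℕ) = m by omega)]
          simp
        · simp [h3]
      · rw [if_neg (show ¬ (j : ℕ) = m - 1 - i by omega),
          if_neg (show ¬ (i : ℕ) = m - 1 - j by omega)]
        by_cases h2 : (i : ℕ) + j = m
        · rw [if_pos (by omega), if_pos (by omega)]
          by_cases h3 : i = j
          · subst h3
            rw [if_pos rfl, if_pos (by omega), pcoef_mid m hm σ₀ hσ i (by omega)]
            simp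
            norm_num
          · have h4 : (i : ℕ) ≠ j := fun h => h3 (Fin.ext h)
            rw [if_neg h3, pcoef_skew m σ₀ i (by omega) (by omega) (by omega),
              show m - 1 - (j : ℕ) = i - 1 by omega]
            simp
        · rw [if_neg (by omega), if_neg (by omega)]
          by_cases h3 : i = j
          · subst h3
            rw [if_neg (show ¬ 2 * (i : ℕ) = m by omega)]
            simp
          · simp [h3]

open scoped Matrix in
lemma dissip (m : ℕ) (hm : 2 ≤ m) (σ₀ : ℝ)
    (hσ : (Odd m ∧ (σ₀ = 1 ∨ σ₀ = -1)) ∨ (Even m ∧ σ₀ = (-1) ^ (m / 2))) (k τ : ℝ) (hτ : 0 < τ)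
    (q : Fin m → ℂ) :
    ∑ i, wgt m τ i * inner ℝ (q i) (((((τ⁻¹ : ℝ) : ℂ) • Lmat m σ₀ k τ) *ᵥ q) i) ≤ 0 := by
  have h := dissip_of_entries (wgt m τ) (Lmat m σ₀ k τ)
    (fun i => if 2 * (i : ℕ) = m then -2 else 0) (fun i => by split_ifs <;> norm_num)
    (entries m hm σ₀ hσ k τ hτ) q
  have h2 : ∑ i, wgt m τ i * inner ℝ (q i) (((((τ⁻¹ : ℝ) : ℂ) • Lmat m σ₀ k τ) *ᵥ q) i)
      = τ⁻¹ * ∑ i, wgt m τ i * inner ℝ (q i) ((Lmat m σ₀ k τ *ᵥ q) i) := by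
    rw [Finset.mul_sum]
    refine Finset.sum_congr rfl fun i _ => ?_
    rw [Matrix.smul_mulVec, Pi.smul_apply, Complex.coe_smul, inner_smul_right]
    ring
  rw [h2]
  exact mul_nonpos_of_nonneg_of_nonpos (by positivity) h

section
attribute [local instance] Matrix.linftyOpNormedRing Matrix.linftyOpNormedAlgebra

open scoped Matrix in
lemma hasDerivAt_expMulVec (m : ℕ) (A : Matrix (Fin m) (Fin m) ℂ) (v : Fin m → ℂ) (t : ℝ) :
    HasDerivAt (fun s : ℝ => NormedSpace.exp ((s : ℂ) • A) *ᵥ v)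
      (A *ᵥ (NormedSpace.exp ((t : ℂ) • A) *ᵥ v)) t := by
  have h : HasDerivAt (fun s : ℝ => NormedSpace.exp (s • A))
      (A * NormedSpace.exp (t • A)) t := hasDerivAt_exp_smul_const' A t
  let Φ : Matrix (Fin m) (Fin m) ℂ →ₗ[ℝ] (Fin m → ℂ) :=
    { toFun := fun M => M *ᵥ v
      map_add' := fun M N => Matrix.add_mulVec M N v
      map_smul' := fun c M => Matrix.smul_mulVec c M v }
  have h2 := (LinearMap.toContinuousLinearMap Φ).hasFDerivAt.comp_hasDerivAt t h
  rw [Matrix.mulVec_mulVec]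
  exact h2

end

/-- First corrector of the slow eigenvector. -/
noncomputable def corr (m : ℕ) (σ₀ : ℝ) (z lam : ℂ) : ℕ → ℂ
  | 0 => 0
  | j + 1 => z * corr m σ₀ z lam j + lam * (pcoef m σ₀ j : ℂ) * z ^ (m - 1 - j)

open scoped Matrix in
lemma resid_eq (m : ℕ) (hm : 2 ≤ m) (σ₀ : ℝ) (hσ : σ₀ * σ₀ = 1) (k τ : ℝ) (hτ : 0 < τ)
    (z lam : ℂ) (hz : z = Complex.I * k) (hlam : lam = -(σ₀ : ℂ) * z ^ m)
    (s : ℕ → ℂ) (hs : s = corr m σ₀ z lam) (μ : ℂ) (hμ : μ = lam - τ * (z * σ₀ * s (m - 1)))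
    (i : Fin m) :
    ((((τ⁻¹ : ℝ) : ℂ) • Lmat m σ₀ k τ) *ᵥ (fun j : Fin m => z ^ (j : ℕ) + τ * s j)) i
      - μ * (z ^ (i : ℕ) + τ * s i)
      = if (i : ℕ) = 0 then 0 else τ * (z * σ₀ * s (m - 1) * z ^ (i : ℕ) - μ * s i) := by
  have hi' := i.isLt
  have hτ' : (τ : ℂ) ≠ 0 := by exact_mod_cast hτ.ne'
  rw [Matrix.smul_mulVec, Pi.smul_apply, smul_eq_mul]
  have hs0 : s 0 = 0 := by rw [hs]; rfl
  by_cases hi : (i : ℕ) = 0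
  · rw [mulVec_zero m hm σ₀ k τ (fun j => z ^ j + τ * s j) i hi, if_pos hi, hi, hs0, ← hz, hμ, hlam]
    have : z ^ m = z * z ^ (m - 1) := by
      rw [← pow_succ']; congr 1; omega
    rw [this]
    push_cast
    field_simp
    ring
  · rw [mulVec_pos m hm σ₀ k τ (fun j => z ^ j + τ * s j) i hi, if_neg hi, ← hz]
    have h1 : s (m - i) = z * s (m - 1 - i) + lam * (pcoef m σ₀ (m - 1 - i) : ℂ) * z ^ (i : ℕ) := by
      rw [hs, show m - (i : ℕ) = (m - 1 - i) + 1 by omega, corr]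
      congr 3
      omega
    have h2 : z ^ (m - (i : ℕ)) = z * z ^ (m - 1 - (i : ℕ)) := by
      rw [← pow_succ']; congr 1; omega
    have h3 : (pcoef m σ₀ (m - 1 - i) : ℂ) * (pcoef m σ₀ (m - 1 - i) : ℂ) = 1 := by
      exact_mod_cast pcoef_sq m σ₀ hσ _
    simp only [h1, h2]
    have h4 : (τ : ℂ) * (τ : ℂ)⁻¹ = 1 := mul_inv_cancel₀ hτ'
    have h5 : lam = μ + τ * (z * σ₀ * s (m - 1)) := by rw [hμ]; ring
    push_cast
    linear_combination (lam * z ^ (i : ℕ) * (τ : ℂ) * (τ : ℂ)⁻¹) * h3 + lam * z ^ (i : ℕ) * h4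
      + z ^ (i : ℕ) * h5

lemma norm_exp_sub_le' (a b : ℂ) :
    ‖Complex.exp a - Complex.exp b‖ ≤ Real.exp ‖b‖ * (‖a - b‖ * Real.exp ‖a - b‖) := by
  have h : Complex.exp a - Complex.exp b = Complex.exp b * (Complex.exp (a - b) - 1) := by
    rw [mul_sub, ← Complex.exp_add]; simp
  rw [h, norm_mul]
  refine mul_le_mul (Complex.norm_exp_le_exp_norm b) ?_ (norm_nonneg _) (Real.exp_pos _).le
  have := Complex.norm_exp_sub_sum_le_norm_mul_exp (a - b) 1
  simpa using this

open scoped Matrix in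
theorem stmt13 (m : ℕ) (hm : 2 ≤ m) (σ₀ : ℝ)
    (hσ : (Odd m ∧ (σ₀ = 1 ∨ σ₀ = -1)) ∨ (Even m ∧ σ₀ = (-1) ^ (m / 2)))
    (k : ℝ) (T : ℝ) (hT : 0 ≤ T) :
    ∃ τbar C : ℝ, 0 < τbar ∧ 0 < C ∧
      ∀ τ ∈ Set.Ioo (0 : ℝ) τbar, ∀ t ∈ Set.Icc (0 : ℝ) T,
        ‖(NormedSpace.exp (((t / τ : ℝ) : ℂ) • Lmat m σ₀ k τ)).mulVec (r0 m k)
            - Complex.exp (-(σ₀ : ℂ) * (Complex.I * (k : ℂ)) ^ m * (t : ℂ)) • r0 m k‖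
          ≤ C * τ := by
  have hσ1 : σ₀ * σ₀ = 1 := by
    rcases hσ with ⟨_, h | h⟩ | ⟨_, h⟩
    · rw [h]; norm_num
    · rw [h]; norm_num
    · rw [h, ← mul_pow]; norm_num
  obtain ⟨z, hz⟩ : ∃ z : ℂ, z = Complex.I * k := ⟨_, rfl⟩
  obtain ⟨lam, hlam⟩ : ∃ lam : ℂ, lam = -(σ₀ : ℂ) * z ^ m := ⟨_, rfl⟩
  obtain ⟨s, hs⟩ : ∃ s : ℕ → ℂ, s = corr m σ₀ z lam := ⟨_, rfl⟩
  have hs0 : s 0 = 0 := by rw [hs]; rfl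
  obtain ⟨S, hS⟩ : ∃ S : ℝ, S = 1 + ∑ i ∈ Finset.range m, (‖z ^ i‖ + ‖s i‖) := ⟨_, rfl⟩
  have hSb : ∀ i < m, ‖z ^ i‖ + ‖s i‖ ≤ S := fun i hi => by
    have := Finset.single_le_sum (f := fun i => ‖z ^ i‖ + ‖s i‖) (fun i _ => by positivity)
      (Finset.mem_range.2 hi)
    linarith
  have hS1 : ∀ i < m, ‖z ^ i‖ ≤ S := fun i hi => by linarith [hSb i hi, norm_nonneg (s i)]
  have hS2 : ∀ i < m, ‖s i‖ ≤ S := fun i hi => by linarith [hSb i hi, norm_nonneg (z ^ i)]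
  have hSpos : 0 < S := by
    have : 0 ≤ ∑ i ∈ Finset.range m, (‖z ^ i‖ + ‖s i‖) :=
      Finset.sum_nonneg fun i _ => by positivity
    linarith
  obtain ⟨K, hK⟩ : ∃ K : ℝ, K = ‖z * σ₀ * s (m - 1)‖ := ⟨_, rfl⟩
  have hK0 : 0 ≤ K := hK ▸ norm_nonneg _
  obtain ⟨M, hM⟩ : ∃ M : ℝ, M = ‖lam‖ + K := ⟨_, rfl⟩
  have hM0 : 0 ≤ M := by rw [hM]; positivity
  obtain ⟨G, hG⟩ : ∃ G : ℝ, G = Real.exp (M * T) * (K * S + M * S) := ⟨_, rfl⟩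
  obtain ⟨H, hH⟩ : ∃ H : ℝ, H = Real.exp T * (m * S ^ 2 + m * G ^ 2 * T) := ⟨_, rfl⟩
  obtain ⟨C, hC⟩ : ∃ C : ℝ, C = √H + (Real.exp (M * T) * S
    + Real.exp (M * T) * (K * T * Real.exp (M * T)) * S) := ⟨_, rfl⟩
  have hCpos : 0 < C := by rw [hC]; positivity
  refine ⟨1, C, one_pos, hCpos, ?_⟩
  rintro τ ⟨hτ, hτ1⟩ t ht
  obtain ⟨μ, hμ⟩ : ∃ μ : ℂ, μ = lam - τ * (z * σ₀ * s (m - 1)) := ⟨_, rfl⟩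
  have hμlam : ‖μ - lam‖ = τ * K := by
    rw [hμ, hK, sub_sub_cancel_left, norm_neg, norm_mul, Complex.norm_real,
      Real.norm_of_nonneg hτ.le]
  have hτK : τ * K ≤ K := by nlinarith
  have hμM : ‖μ‖ ≤ M := by
    have := norm_add_le lam (μ - lam)
    rw [add_sub_cancel, hμlam] at this
    linarith
  have hexp : ∀ t ∈ Set.Icc (0 : ℝ) T, ‖Complex.exp (μ * t)‖ ≤ Real.exp (M * T) := by
    intro t ht
    refine (Complex.norm_exp_le_exp_norm _).trans (Real.exp_le_exp.2 ?_)
    rw [norm_mul, Complex.norm_real, Real.norm_of_nonneg ht.1]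
    exact mul_le_mul hμM ht.2 ht.1 hM0
  set A : Matrix (Fin m) (Fin m) ℂ := ((τ⁻¹ : ℝ) : ℂ) • Lmat m σ₀ k τ with hA
  let ρ : Fin m → ℂ := fun j => z ^ (j : ℕ) + τ * s j
  let q : ℝ → Fin m → ℂ := fun t => NormedSpace.exp ((t : ℂ) • A) *ᵥ r0 m k
  let v : ℝ → Fin m → ℂ := fun t => Complex.exp (μ * t) • ρ
  let R : ℝ → Fin m → ℂ := fun t => Complex.exp (μ * t) • (A *ᵥ ρ - μ • ρ)
  have hres := resid_eq m hm σ₀ hσ1 k τ hτ z lam hz hlam s hs μ hμ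
  rw [← hA] at hres
  have hRi : ∀ t i, R t i = Complex.exp (μ * t) *
      (if (i : ℕ) = 0 then 0 else τ * (z * σ₀ * s (m - 1) * z ^ (i : ℕ) - μ * s i)) := by
    intro t i
    rw [← hres i]
    rfl
  have hv : ∀ t, HasDerivAt v (μ • v t) t := by
    intro t
    have h1 : HasDerivAt (fun t : ℝ => μ * (t : ℂ)) μ t := by
      simpa using (Complex.ofRealCLM.hasDerivAt (x := t)).const_mul μ
    have h2 := (h1.cexp).smul_const ρ
    have e : μ • v t = (Complex.exp (μ * t) * μ) • ρ := by
      rw [mul_comm, mul_smul]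
    rw [e]
    exact h2
  have hw : ∀ t, HasDerivAt (fun t => q t - v t) (A *ᵥ (q t - v t) + R t) t := by
    intro t
    have e : A *ᵥ (q t - v t) + R t = A *ᵥ (NormedSpace.exp ((t : ℂ) • A) *ᵥ r0 m k) - μ • v t := by
      simp only [R, v, q, Matrix.mulVec_sub, Matrix.mulVec_smul, smul_sub]
      rw [smul_comm μ]
      abel
    rw [e]
    exact (hasDerivAt_expMulVec m A (r0 m k) t).sub (hv t)
  have hwgt : ∀ i, 0 ≤ wgt m τ i := fun i => by
    unfold wgt; split_ifs <;> positivity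
  have hwgt1 : ∀ i, 1 ≤ wgt m τ i := fun i => by
    unfold wgt; split_ifs
    · exact (one_le_inv₀ hτ).2 hτ1.le
    · exact le_rfl
  have hwt : ∀ (X : ℝ) (x : Fin m → ℂ), 0 ≤ X → (∀ i : Fin m, (i : ℕ) = 0 → x i = 0) →
      (∀ i, ‖x i‖ ≤ X) → ∑ i, wgt m τ i * ‖x i‖ ^ 2 ≤ m * X ^ 2 := by
    intro X x hX h0 hx
    have : ∑ i, wgt m τ i * ‖x i‖ ^ 2 ≤ ∑ i : Fin m, X ^ 2 := by
      refine Finset.sum_le_sum fun i _ => ?_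
      by_cases hi : (i : ℕ) = 0
      · rw [h0 i hi]; simp; positivity
      · rw [wgt, if_neg hi, one_mul]
        exact pow_le_pow_left₀ (norm_nonneg _) (hx i) 2
    simpa using this
  have hG0 : 0 ≤ G := by rw [hG]; positivity
  have hEn := energy_bound (wgt m τ) A hwgt (dissip m hm σ₀ hσ k τ hτ) (fun t => q t - v t) R T
    (m * (τ * G) ^ 2) hw (by positivity) (by
      intro t ht
      refine hwt _ _ (by positivity) (fun i hi => by rw [hRi, if_pos hi, mul_zero]) fun i => ?_
      rw [hRi]
      by_cases hi : (i : ℕ) = 0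
      · rw [if_pos hi]; simp; positivity
      · rw [if_neg hi, norm_mul, norm_mul, Complex.norm_real, Real.norm_of_nonneg hτ.le, hG]
        have h1 : ‖z * σ₀ * s (m - 1) * z ^ (i : ℕ) - μ * s i‖ ≤ K * S + M * S := by
          refine (norm_sub_le _ _).trans (add_le_add ?_ ?_)
          · rw [norm_mul, ← hK]
            exact mul_le_mul_of_nonneg_left (hS1 i i.isLt) hK0
          · rw [norm_mul]
            exact mul_le_mul hμM (hS2 i i.isLt) (norm_nonneg _) hM0
        calc ‖Complex.exp (μ * t)‖ * (τ * ‖z * σ₀ * s (m - 1) * z ^ (i : ℕ) - μ * s i‖)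
            ≤ Real.exp (M * T) * (τ * (K * S + M * S)) :=
              mul_le_mul (hexp t ht) (mul_le_mul_of_nonneg_left h1 hτ.le) (by positivity)
                (by positivity)
          _ = _ := by ring) t ht
  have hE0 : ∑ i, wgt m τ i * ‖(q 0 - v 0) i‖ ^ 2 ≤ m * (τ * S) ^ 2 := by
    have h0 : ∀ i, (q 0 - v 0) i = - (τ * s i) := by
      intro i
      simp [q, v, ρ, r0, ← hz]
    refine hwt _ _ (by positivity) (fun i hi => by rw [h0, hi, hs0]; simp) fun i => ?_
    rw [h0, norm_neg, norm_mul, Complex.norm_real, Real.norm_of_nonneg hτ.le]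
    exact mul_le_mul_of_nonneg_left (hS2 i i.isLt) hτ.le
  have hEn2 : ∑ i, wgt m τ i * ‖(q t - v t) i‖ ^ 2 ≤ τ ^ 2 * H := by
    refine hEn.trans ?_
    rw [hH]
    have := mul_le_mul_of_nonneg_left hE0 (Real.exp_pos T).le
    nlinarith
  have hH0 : 0 ≤ H := by rw [hH]; positivity
  rw [pi_norm_le_iff_of_nonneg (by positivity)]
  intro i
  have hwi : ‖(q t - v t) i‖ ≤ √H * τ := by
    refine abs_le_of_sq_le_sq' (b := √H * τ) ?_ (by positivity) |>.2
    have h1 := Finset.single_le_sum (f := fun i => wgt m τ i * ‖(q t - v t) i‖ ^ 2)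
      (fun i _ => mul_nonneg (hwgt i) (by positivity)) (Finset.mem_univ i)
    have h2 := mul_le_mul_of_nonneg_right (hwgt1 i) (sq_nonneg ‖(q t - v t) i‖)
    rw [mul_pow, Real.sq_sqrt hH0]
    linarith
  have hvi : ‖v t i - Complex.exp (lam * t) * z ^ (i : ℕ)‖
      ≤ (Real.exp (M * T) * S + Real.exp (M * T) * (K * T * Real.exp (M * T)) * S) * τ := by
    have h1 : v t i - Complex.exp (lam * t) * z ^ (i : ℕ)
        = Complex.exp (μ * t) * (τ * s i)
          + (Complex.exp (μ * t) - Complex.exp (lam * t)) * z ^ (i : ℕ) := by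
      simp only [v, ρ, Pi.smul_apply, smul_eq_mul]; ring
    have hd : ‖μ * t - lam * t‖ = τ * K * t := by
      rw [← sub_mul, norm_mul, hμlam, Complex.norm_real, Real.norm_of_nonneg ht.1]
    have h2 : ‖Complex.exp (μ * t) - Complex.exp (lam * t)‖
        ≤ Real.exp (M * T) * (τ * K * T * Real.exp (M * T)) := by
      refine (norm_exp_sub_le' _ _).trans ?_
      rw [hd, norm_mul, Complex.norm_real, Real.norm_of_nonneg ht.1]
      have hl : ‖lam‖ ≤ M := by linarith
      have hk : τ * K ≤ M := by linarith [norm_nonneg lam]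
      have ht0 := ht.1
      have htT := ht.2
      gcongr
    rw [h1]
    refine (norm_add_le _ _).trans ?_
    rw [norm_mul, norm_mul, norm_mul, Complex.norm_real, Real.norm_of_nonneg hτ.le]
    have h3 : ‖Complex.exp (μ * t)‖ * (τ * ‖s i‖) ≤ Real.exp (M * T) * (τ * S) :=
      mul_le_mul (hexp t ht) (mul_le_mul_of_nonneg_left (hS2 i i.isLt) hτ.le) (by positivity)
        (by positivity)
    have h4 := mul_le_mul h2 (hS1 i i.isLt) (norm_nonneg _) (by positivity)
    linarith
  have hfin : ((NormedSpace.exp (((t / τ : ℝ) : ℂ) • Lmat m σ₀ k τ)).mulVec (r0 m k)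
            - Complex.exp (-(σ₀ : ℂ) * (Complex.I * (k : ℂ)) ^ m * (t : ℂ)) • r0 m k) i
      = (q t - v t) i + (v t i - Complex.exp (lam * t) * z ^ (i : ℕ)) := by
    have : (((t / τ : ℝ) : ℂ) • Lmat m σ₀ k τ) = (t : ℂ) • A := by
      rw [hA, smul_smul, ← Complex.ofReal_mul, div_eq_mul_inv]
    rw [this, ← hz, ← hlam]
    simp only [Pi.sub_apply, Pi.smul_apply, smul_eq_mul, q, r0, ← hz]
    ring
  rw [hfin, hC, add_mul]
  exact (norm_add_le _ _).trans (add_le_add hwi hvi)
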